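/- arXiv:2309.04913 — 2 statements merged into one kernel-verified Lean document; each statement's English description precedes it below -/
import Mathlib

section
/- Let 0 → A → E → B → 0 be a non-abelian extension of perm algebras with section ς : B → E (so π∘ς = id_B). Define b⊳a = ς(b)a, a⊲b = aς(b), and χ(b1,b2) = ς(b1)ς(b2) − ς(b1b2) (all landing in A ≅ Ker π). Then (⊳, ⊲, χ) is a non-abelian 2-cocycle on B with values in A. -/
/-- The 2-cocycle `χ(b₁,b₂) = ς(b₁)ς(b₂) − ς(b₁b₂)` attached to a section `ς` of a
non-abelian extension. -/
def extCocycle {k E B : Type*} [Field k] [AddCommGroup E] [Module k E]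
    [AddCommGroup B] [Module k B]
    (mul : E →ₗ[k] E →ₗ[k] E) (mulB : B →ₗ[k] B →ₗ[k] B) (ς : B →ₗ[k] E)
    (b1 b2 : B) : E :=
  mul (ς b1) (ς b2) - ς (mulB b1 b2)

/-- Let `0 → A → E → B → 0` be a non-abelian extension of perm algebras (with `A = ker π`)
and `ς` a section of `π`.  Define `b⊳a = ς(b)a`, `a⊲b = aς(b)` and
`χ(b₁,b₂) = ς(b₁)ς(b₂) − ς(b₁b₂)`.  Then these maps take values in `A`, and `(⊳, ⊲, χ)`
is a non-abelian 2-cocycle on `B` with values in `A`. -/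
theorem section_gives_nonabelian_cocycle {k E B : Type*} [Field k]
    [AddCommGroup E] [Module k E] [AddCommGroup B] [Module k B]
    (mul : E →ₗ[k] E →ₗ[k] E)
    (hp1 : ∀ x y z, mul (mul x y) z = mul x (mul y z))
    (hp2 : ∀ x y z, mul x (mul y z) = mul x (mul z y))
    (mulB : B →ₗ[k] B →ₗ[k] B)
    (hpB1 : ∀ x y z, mulB (mulB x y) z = mulB x (mulB y z))
    (hpB2 : ∀ x y z, mulB x (mulB y z) = mulB x (mulB z y))
    (π : E →ₗ[k] B)
    (hπ : ∀ x y : E, π (mul x y) = mulB (π x) (π y))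
    (hsurj : Function.Surjective π)
    (ς : B →ₗ[k] E)
    (hς : ∀ b : B, π (ς b) = b) :
    -- the maps take values in A = ker π
    ((∀ (b : B) (a : E), π a = 0 → π (mul (ς b) a) = 0 ∧ π (mul a (ς b)) = 0) ∧
     (∀ b1 b2 : B, π (extCocycle mul mulB ς b1 b2) = 0)) ∧
    -- cocycle condition 1
    (∀ (a1 a2 : E) (b : B), π a1 = 0 → π a2 = 0 →
      mul (mul a1 a2) (ς b) - mul (mul a2 a1) (ς b) =
        mul a1 (mul a2 (ς b)) - mul a2 (mul a1 (ς b))) ∧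
    -- cocycle condition 2
    (∀ (a1 a2 : E) (b : B), π a1 = 0 → π a2 = 0 →
      mul (ς b) (mul a1 a2) - mul a1 (mul (ς b) a2) =
        mul (mul (ς b) a1 - mul a1 (ς b)) a2) ∧
    -- cocycle condition 3
    (∀ (a : E) (b1 b2 : B), π a = 0 →
      mul (ς b1) (mul a (ς b2)) - mul (mul (ς b1) a) (ς b2) =
        mul a (ς (mulB b1 b2)) - mul (mul a (ς b1)) (ς b2) +
          mul a (extCocycle mul mulB ς b1 b2)) ∧
    -- cocycle condition 4
    (∀ (a : E) (b1 b2 : B), π a = 0 →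
      mul (ς (mulB b1 b2 - mulB b2 b1)) a =
        mul (ς b1) (mul (ς b2) a) - mul (ς b2) (mul (ς b1) a) -
          mul (extCocycle mul mulB ς b1 b2) a + mul (extCocycle mul mulB ς b2 b1) a) ∧
    -- cocycle condition 5
    (∀ b1 b2 b3 : B,
      extCocycle mul mulB ς (mulB b1 b2) b3 - extCocycle mul mulB ς b1 (mulB b2 b3) -
          extCocycle mul mulB ς (mulB b2 b1) b3 + extCocycle mul mulB ς b2 (mulB b1 b3) =
        mul (ς b1) (extCocycle mul mulB ς b2 b3) -
          mul (ς b2) (extCocycle mul mulB ς b1 b3) -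
          mul (extCocycle mul mulB ς b1 b2) (ς b3) +
          mul (extCocycle mul mulB ς b2 b1) (ς b3)) := by
  refine ⟨⟨fun b a ha => ⟨by simp [hπ, ha], by simp [hπ, ha]⟩,
    fun b1 b2 => by simp [extCocycle, hπ, hς]⟩, ?_, ?_, ?_, ?_, ?_⟩
  · intro a1 a2 b _ _
    rw [hp1, hp1]
  · intro a1 a2 b _ _
    simp only [map_sub, LinearMap.sub_apply, hp1]
  · intro a b1 b2 _
    simp only [extCocycle, map_sub, hp1]
    abel
  · intro a b1 b2 _
    simp only [extCocycle, map_sub, LinearMap.sub_apply, hp1]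
    abel
  · intro b1 b2 b3
    simp only [extCocycle, map_sub, LinearMap.sub_apply, hp1, hpB1]
    abel
end

section
/- Let A be a finite-dimensional perm algebra and let R ∈ A ⊗ A be symmetric (τR = R) and nondegenerate, with associated linear isomorphism R# : A* → A defined by ⟨R#(u1), u2⟩ = ⟨R, u1 ⊗ u2⟩. Then R satisfies the S-equation R13R12 − R13R23 + R23R12 − R12R23 = 0 if and only if the bilinear form ω̄(a1, a2) = ⟨a1, (R#)^{-1}(a2)⟩ on A satisfies ω̄(a1a2, a3) + ω̄(a1a3, a2) = ω̄(a3a2, a1) + ω̄(a3a1, a2) for all a1, a2, a3 ∈ A. -/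
open TensorProduct

/-- For `R = Σᵢ aᵢ ⊗ āᵢ ∈ A ⊗ A`, the element
`P(R) = R₁₃R₁₂ − R₁₃R₂₃ + R₂₃R₁₂ − R₁₂R₂₃ ∈ A ⊗ A ⊗ A`; the S-equation is `P(R) = 0`.
Explicitly `R₁₃R₁₂ = Σ aᵢaⱼ ⊗ āⱼ ⊗ āᵢ`, `R₁₃R₂₃ = Σ aᵢ ⊗ aⱼ ⊗ āᵢāⱼ`,
`R₂₃R₁₂ = Σ aⱼ ⊗ aᵢāⱼ ⊗ āᵢ`, `R₁₂R₂₃ = Σ aᵢ ⊗ āᵢaⱼ ⊗ āⱼ`. -/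
noncomputable def sTensor {k A : Type*} [Field k] [AddCommGroup A] [Module k A]
    (mul : A →ₗ[k] A →ₗ[k] A) (R : A ⊗[k] A) : A ⊗[k] (A ⊗[k] A) :=
  let M : A ⊗[k] A →ₗ[k] A := TensorProduct.lift mul
  let X : (A ⊗[k] A) ⊗[k] (A ⊗[k] A) := R ⊗ₜ[k] R
  let Y := (TensorProduct.tensorTensorTensorComm k A A A A) X
  -- R₁₃R₁₂
  (TensorProduct.map M LinearMap.id)
      ((TensorProduct.map LinearMap.id (TensorProduct.comm k A A).toLinearMap) Y)
  -- − R₁₃R₂₃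
  - (TensorProduct.assoc k A A A) ((TensorProduct.map LinearMap.id M) Y)
  -- + R₂₃R₁₂
  + (TensorProduct.map LinearMap.id (TensorProduct.map M LinearMap.id))
      ((TensorProduct.map LinearMap.id (TensorProduct.assoc k A A A).symm.toLinearMap)
        ((TensorProduct.assoc k A A (A ⊗[k] A))
          ((TensorProduct.tensorTensorTensorComm k A A A A)
            ((TensorProduct.comm k (A ⊗[k] A) (A ⊗[k] A)) X))))
  -- − R₁₂R₂₃
  - (TensorProduct.map LinearMap.id (TensorProduct.map M LinearMap.id))
      ((TensorProduct.map LinearMap.id (TensorProduct.assoc k A A A).symm.toLinearMap)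
        ((TensorProduct.assoc k A A (A ⊗[k] A)) X))

/-- The linear map `R♯ : A* → A` attached to `R ∈ A ⊗ A`, determined by
`⟨R♯(u₁), u₂⟩ = ⟨R, u₁ ⊗ u₂⟩`. -/
noncomputable def rSharp {k A : Type*} [Field k] [AddCommGroup A] [Module k A]
    (R : A ⊗[k] A) : Module.Dual k A → A :=
  fun u => (TensorProduct.lid k A) ((TensorProduct.map u LinearMap.id) R)

/-- Pairing of a triple tensor with three functionals. -/
noncomputable def pair3 {k A : Type*} [Field k] [AddCommGroup A] [Module k A]
    (u v w : Module.Dual k A) : A ⊗[k] (A ⊗[k] A) →ₗ[k] k :=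
  LinearMap.mul' k k ∘ₗ TensorProduct.map u (LinearMap.mul' k k ∘ₗ TensorProduct.map v w)

theorem pair3_tmul {k A : Type*} [Field k] [AddCommGroup A] [Module k A]
    (u v w : Module.Dual k A) (a b c : A) :
    pair3 u v w (a ⊗ₜ[k] (b ⊗ₜ[k] c)) = u a * (v b * w c) := by
  simp [pair3]

theorem pair3_ext {k A : Type*} [Field k] [AddCommGroup A] [Module k A]
    [FiniteDimensional k A] (x : A ⊗[k] (A ⊗[k] A))
    (h : ∀ u v w, pair3 u v w x = 0) : x = 0 := by
  let b := Module.finBasis k A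
  apply (b.tensorProduct (b.tensorProduct b)).ext_elem
  rintro ⟨i, j, l⟩
  rw [map_zero, Finsupp.zero_apply, ← h (b.coord i) (b.coord j) (b.coord l)]
  have : (b.tensorProduct (b.tensorProduct b)).coord (i, j, l)
      = pair3 (b.coord i) (b.coord j) (b.coord l) := by
    ext p q r
    simp [pair3_tmul]
    ring
  exact LinearMap.congr_fun this x

/-- contraction of the second factor -/
noncomputable def lSharp {k A : Type*} [Field k] [AddCommGroup A] [Module k A]
    (R : A ⊗[k] A) (u : Module.Dual k A) : A :=
  (TensorProduct.rid k A) ((TensorProduct.map LinearMap.id u) R)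

theorem lSharp_eq {k A : Type*} [Field k] [AddCommGroup A] [Module k A]
    (R : A ⊗[k] A) (u : Module.Dual k A) :
    lSharp R u = rSharp ((TensorProduct.comm k A A) R) u := by
  unfold lSharp rSharp
  induction R with
  | zero => simp
  | tmul a b => simp
  | add x y hx hy => simp only [map_add, hx, hy]

theorem term1 {k A : Type*} [Field k] [AddCommGroup A] [Module k A]
    (mul : A →ₗ[k] A →ₗ[k] A) (R S : A ⊗[k] A) (u v w : Module.Dual k A) :
    pair3 u v w ((TensorProduct.map (TensorProduct.lift mul) LinearMap.id)
      ((TensorProduct.map LinearMap.id (TensorProduct.comm k A A).toLinearMap)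
        ((TensorProduct.tensorTensorTensorComm k A A A A) (R ⊗ₜ[k] S))))
      = u (mul (lSharp R w) (lSharp S v)) := by
  unfold lSharp
  induction R with
  | zero => simp
  | add x y hx hy => simp only [TensorProduct.add_tmul, map_add, hx, hy, LinearMap.add_apply]
  | tmul a b =>
    induction S with
    | zero => simp
    | add x y hx hy => simp only [TensorProduct.tmul_add, map_add, hx, hy]
    | tmul c d => simp [pair3_tmul]; ring

theorem term2 {k A : Type*} [Field k] [AddCommGroup A] [Module k A]
    (mul : A →ₗ[k] A →ₗ[k] A) (R S : A ⊗[k] A) (u v w : Module.Dual k A) :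
    pair3 u v w ((TensorProduct.assoc k A A A)
      ((TensorProduct.map LinearMap.id (TensorProduct.lift mul))
        ((TensorProduct.tensorTensorTensorComm k A A A A) (R ⊗ₜ[k] S))))
      = w (mul (rSharp R u) (rSharp S v)) := by
  unfold rSharp
  induction R with
  | zero => simp
  | add x y hx hy => simp only [TensorProduct.add_tmul, map_add, hx, hy, LinearMap.add_apply]
  | tmul a b =>
    induction S with
    | zero => simp
    | add x y hx hy => simp only [TensorProduct.tmul_add, map_add, hx, hy]
    | tmul c d => simp [pair3_tmul]; ring

theorem term3 {k A : Type*} [Field k] [AddCommGroup A] [Module k A]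
    (mul : A →ₗ[k] A →ₗ[k] A) (R S : A ⊗[k] A) (u v w : Module.Dual k A) :
    pair3 u v w ((TensorProduct.map LinearMap.id
        (TensorProduct.map (TensorProduct.lift mul) LinearMap.id))
      ((TensorProduct.map LinearMap.id (TensorProduct.assoc k A A A).symm.toLinearMap)
        ((TensorProduct.assoc k A A (A ⊗[k] A))
          ((TensorProduct.tensorTensorTensorComm k A A A A)
            ((TensorProduct.comm k (A ⊗[k] A) (A ⊗[k] A)) (R ⊗ₜ[k] S))))))
      = v (mul (lSharp R w) (rSharp S u)) := by
  unfold rSharp lSharp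
  induction R with
  | zero => simp
  | add x y hx hy => simp only [TensorProduct.add_tmul, map_add, hx, hy, LinearMap.add_apply]
  | tmul a b =>
    induction S with
    | zero => simp
    | add x y hx hy => simp only [TensorProduct.tmul_add, map_add, hx, hy]
    | tmul c d => simp [pair3_tmul]; left; ring

theorem term4 {k A : Type*} [Field k] [AddCommGroup A] [Module k A]
    (mul : A →ₗ[k] A →ₗ[k] A) (R S : A ⊗[k] A) (u v w : Module.Dual k A) :
    pair3 u v w ((TensorProduct.map LinearMap.id
        (TensorProduct.map (TensorProduct.lift mul) LinearMap.id))
      ((TensorProduct.map LinearMap.id (TensorProduct.assoc k A A A).symm.toLinearMap)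
        ((TensorProduct.assoc k A A (A ⊗[k] A)) (R ⊗ₜ[k] S))))
      = v (mul (rSharp R u) (lSharp S w)) := by
  unfold rSharp lSharp
  induction R with
  | zero => simp
  | add x y hx hy => simp only [TensorProduct.add_tmul, map_add, hx, hy, LinearMap.add_apply]
  | tmul a b =>
    induction S with
    | zero => simp
    | add x y hx hy => simp only [TensorProduct.tmul_add, map_add, hx, hy]
    | tmul c d => simp [pair3_tmul]; try ring

theorem pair3_sTensor {k A : Type*} [Field k] [AddCommGroup A] [Module k A]
    (mul : A →ₗ[k] A →ₗ[k] A) (R : A ⊗[k] A)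
    (hsym : (TensorProduct.comm k A A) R = R) (u v w : Module.Dual k A) :
    pair3 u v w (sTensor mul R) =
      u (mul (rSharp R w) (rSharp R v)) - w (mul (rSharp R u) (rSharp R v))
      + v (mul (rSharp R w) (rSharp R u)) - v (mul (rSharp R u) (rSharp R w)) := by
  have hl : ∀ f, lSharp R f = rSharp R f := fun f => by rw [lSharp_eq, hsym]
  simp only [sTensor]
  rw [map_sub, map_add, map_sub, term1, term2, term3, term4]
  simp only [hl]

/-- For a nondegenerate symmetric `R ∈ A ⊗ A` over a finite-dimensional perm algebra `A`,
`R` satisfies the S-equation if and only if the bilinear form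
`ω̄(a₁,a₂) = ⟨a₁, (R♯)⁻¹(a₂)⟩` satisfies
`ω̄(a₁a₂,a₃) + ω̄(a₁a₃,a₂) = ω̄(a₃a₂,a₁) + ω̄(a₃a₁,a₂)`. -/
theorem sEquation_iff_form {k A : Type*} [Field k] [AddCommGroup A] [Module k A]
    [FiniteDimensional k A]
    (mul : A →ₗ[k] A →ₗ[k] A)
    (hp1 : ∀ x y z, mul (mul x y) z = mul x (mul y z))
    (hp2 : ∀ x y z, mul x (mul y z) = mul x (mul z y))
    (R : A ⊗[k] A)
    (hsym : (TensorProduct.comm k A A) R = R)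
    (hnd : Function.Bijective (rSharp R)) :
    sTensor mul R = 0
    ↔
    (∀ a1 a2 a3 : A,
      (Function.invFun (rSharp R) a3) (mul a1 a2) +
          (Function.invFun (rSharp R) a2) (mul a1 a3) =
        (Function.invFun (rSharp R) a1) (mul a3 a2) +
          (Function.invFun (rSharp R) a2) (mul a3 a1)) := by
  have hinv : ∀ a, rSharp R (Function.invFun (rSharp R) a) = a :=
    Function.rightInverse_invFun hnd.2
  have hinv2 : ∀ u, Function.invFun (rSharp R) (rSharp R u) = u :=
    Function.leftInverse_invFun hnd.1
  constructor
  · intro h a b c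
    have key := pair3_sTensor mul R hsym (Function.invFun (rSharp R) a)
      (Function.invFun (rSharp R) b) (Function.invFun (rSharp R) c)
    rw [h, map_zero] at key
    simp only [hinv] at key
    linear_combination key
  · intro h
    apply pair3_ext
    intro u v w
    rw [pair3_sTensor mul R hsym]
    have key := h (rSharp R u) (rSharp R v) (rSharp R w)
    simp only [hinv2] at key
    linear_combination -key
end
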